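/- For n a positive integer and q not a root of unity, the n-dimensional representation R_n^{(i,+)} of U_q(so_3) given on basis |1⟩,…,|n⟩ by R(I1)|k⟩ = −((q^{k−1/2} + q^{−k+1/2})/(q − q^{-1}))|k⟩, R(I2)|1⟩ = ([n]/(q^{1/2} − q^{-1/2}))|1⟩ + i([n−1]/(q^{1/2} − q^{-1/2}))|2⟩, and R(I2)|k⟩ = i([n−k]/(q^{k−1/2} − q^{−k+1/2}))|k+1⟩ + i([n+k−1]/(q^{k−1/2} − q^{−k+1/2}))|k−1⟩ for k ≠ 1, satisfies the defining relations of U_q(so_3) (relations (7) and (8): R(I1)R(I2)² − (q+q⁻¹)R(I2)R(I1)R(I2) + R(I2)²R(I1) = −R(I1) and symmetrically). -/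

import Mathlib

/-!
Write `x = q^{k-1/2}`, `λ_k = -(x + x⁻¹) / (q - q⁻¹)`, and let `a_k`, `b_k` be the coefficients with
`R(I₂)|k⟩ = a_k |k+1⟩ + b_k |k-1⟩`. All three make sense for every integer `k`, and `λ_{1-k} = λ_k`,
`a_{1-k} = -b_k`. Hence extending the basis by `|1-k⟩ = i (-1)^k |k⟩` turns the exceptional formula
for `R(I₂)|1⟩` into the generic one, and it suffices to check the relations along a sequence of
eigenvectors of `R(I₁)` on which `R(I₂)` is tridiagonal. Relation (8) then amounts to
`λ_{k+1}² - (q + q⁻¹) λ_{k+1} λ_k + λ_k² = -1`. In (7) the coefficients of `|k±2⟩` vanish because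
`λ_{k+1} + λ_{k-1} = (q + q⁻¹) λ_k`, and in the coefficient of `|k⟩` the factors
`2 λ_k - (q + q⁻¹) λ_{k±1} = λ_k - λ_{k±2}` cancel the denominators of `b_{k+1}` and `a_{k-1}`,
leaving the identity `[n+k-1][n-k+1] - [n+k][n-k] = [2k-1]`.
-/

noncomputable section

/-- Basis vector of `Fin n → ℂ` indexed by an integer `k ∈ {1, …, n}`;
`0` when out of range (convention `|0⟩ = |n+1⟩ = 0`). -/
def e (n : ℕ) (k : ℤ) : Fin n → ℂ := fun j => if (j : ℤ) + 1 = k then 1 else 0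

/-- `br q s (2a)` is the `q`-number `[a]` for the half-integer `a`, where `s = q^{1/2}`. -/
def br (q s : ℂ) (t : ℤ) : ℂ := (s ^ t - s ^ (-t)) / (q - q⁻¹)

section CubicRelation

variable {R V : Type*} [CommRing R] [AddCommGroup V] [Module R V]

/-- The cubic expression `A B² - c B A B + B² A`; with `c = q + q⁻¹` the defining relations of
`U_q(so_3)` equate it to `-A`, for both orders of the two generators. -/
def cubicBracket (c : R) (A B : Module.End R V) : Module.End R V :=
  A * B ^ 2 - c • (B * A * B) + B ^ 2 * A

lemma cubicBracket_apply (c : R) (A B : Module.End R V) (x : V) :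
    cubicBracket c A B x = A (B (B x)) - c • B (A (B x)) + B (B (A x)) := by
  simp [cubicBracket, pow_two]

variable {A B : Module.End R V} {v : ℤ → V} {μ a b : ℤ → R} {c : R} {k : ℤ}

lemma cubicBracket_apply_eq_smul (hA : ∀ j, A (v j) = μ j • v j)
    (hμ : ∀ j, μ (j + 1) + μ (j - 1) = c * μ j)
    (hB : B (v k) = a k • v (k + 1) + b k • v (k - 1))
    (hB_succ : a k • B (v (k + 1)) = a k • (a (k + 1) • v (k + 2) + b (k + 1) • v k))
    (hB_pred : B (v (k - 1)) = a (k - 1) • v k + b (k - 1) • v (k - 2)) :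
    cubicBracket c A B (v k) =
      (a k * b (k + 1) * (2 * μ k - c * μ (k + 1)) +
        b k * a (k - 1) * (2 * μ k - c * μ (k - 1))) • v k := by
  have hBB : B (B (v k)) = a k • (a (k + 1) • v (k + 2) + b (k + 1) • v k) +
      b k • (a (k - 1) • v k + b (k - 1) • v (k - 2)) := by
    rw [hB, map_add, map_smul, map_smul, hB_succ, hB_pred]
  have hBAB : B (A (B (v k))) =
      μ (k + 1) • a k • (a (k + 1) • v (k + 2) + b (k + 1) • v k) +
        μ (k - 1) • b k • (a (k - 1) • v k + b (k - 1) • v (k - 2)) := by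
    rw [← hB_succ, ← hB_pred, hB]
    simp only [map_add, map_smul, hA]
    module
  have hμ_succ : μ (k + 2) + μ k = c * μ (k + 1) := by
    simpa [add_assoc, one_add_one_eq_two] using hμ (k + 1)
  have hμ_pred : μ k + μ (k - 2) = c * μ (k - 1) := by
    simpa [sub_sub, one_add_one_eq_two] using hμ (k - 1)
  rw [cubicBracket_apply, hA, map_smul, map_smul, hBAB, hBB]
  simp only [map_add, map_smul, hA]
  calc _ = (a k * a (k + 1) * (μ (k + 2) + μ k - c * μ (k + 1))) • v (k + 2) +
        (b k * b (k - 1) * (μ k + μ (k - 2) - c * μ (k - 1))) • v (k - 2) +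
        (a k * b (k + 1) * (2 * μ k - c * μ (k + 1)) +
          b k * a (k - 1) * (2 * μ k - c * μ (k - 1))) • v k := by module
    _ = _ := by rw [hμ_succ, hμ_pred]; module

lemma cubicBracket_apply_eq_neg (hA : ∀ j, A (v j) = μ j • v j)
    (hμ : ∀ j, μ (j + 1) ^ 2 - c * μ (j + 1) * μ j + μ j ^ 2 = -1)
    (hB : B (v k) = a k • v (k + 1) + b k • v (k - 1)) :
    cubicBracket c B A (v k) = -B (v k) := by
  have hμ_pred : μ k ^ 2 - c * μ k * μ (k - 1) + μ (k - 1) ^ 2 = -1 := by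
    simpa using hμ (k - 1)
  rw [cubicBracket_apply]
  simp only [map_add, map_smul, hA, hB, smul_add, smul_smul]
  calc _ = (a k * (μ (k + 1) ^ 2 - c * μ (k + 1) * μ k + μ k ^ 2)) • v (k + 1) +
        (b k * (μ k ^ 2 - c * μ k * μ (k - 1) + μ (k - 1) ^ 2)) • v (k - 1) := by module
    _ = _ := by rw [hμ, hμ_pred]; module

end CubicRelation

section Coefficients

variable {K : Type*} [Field K]

/-- The `q`-number `[t/2]`, written in terms of `s = q^{1/2}`. -/
def qNumber (s : K) (t : ℤ) : K := (s ^ t - s ^ (-t)) / (s ^ 2 - (s ^ 2)⁻¹)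

/-- The eigenvalue of `R(I₁)` on `|k⟩`, where `s = q^{1/2}`. -/
def diagCoeff (s : K) (k : ℤ) : K :=
  -((s ^ (2 * k - 1) + s ^ (1 - 2 * k)) / (s ^ 2 - (s ^ 2)⁻¹))

/-- The coefficient of `|k+1⟩` in `R(I₂)|k⟩`, where `s = q^{1/2}` and `i² = -1`. -/
def raiseCoeff (i s : K) (n k : ℤ) : K :=
  i * qNumber s (2 * (n - k)) / (s ^ (2 * k - 1) - s ^ (1 - 2 * k))

/-- The coefficient of `|k-1⟩` in `R(I₂)|k⟩`, where `s = q^{1/2}` and `i² = -1`. -/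
def lowerCoeff (i s : K) (n k : ℤ) : K :=
  i * qNumber s (2 * (n + k - 1)) / (s ^ (2 * k - 1) - s ^ (1 - 2 * k))

lemma diagCoeff_one_sub (s : K) (k : ℤ) : diagCoeff s (1 - k) = diagCoeff s k := by
  rw [diagCoeff, diagCoeff, add_comm]
  congr 4 <;> ring

lemma raiseCoeff_one_sub (i s : K) (n k : ℤ) :
    raiseCoeff i s n (1 - k) = -lowerCoeff i s n k := by
  rw [raiseCoeff, lowerCoeff, ← div_neg, neg_sub]
  congr 3 <;> ring_nf

lemma lowerCoeff_one_sub (i s : K) (n k : ℤ) :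
    lowerCoeff i s n (1 - k) = -raiseCoeff i s n k := by
  rw [← neg_eq_iff_eq_neg, ← raiseCoeff_one_sub, sub_sub_cancel]

lemma raiseCoeff_self (i s : K) (n : ℤ) : raiseCoeff i s n n = 0 := by
  simp [raiseCoeff, qNumber]

lemma zpow_one_sub_two_mul (s : K) (k : ℤ) : s ^ (1 - 2 * k) = (s ^ (2 * k - 1))⁻¹ := by
  rw [← zpow_neg, neg_sub]

lemma qNumber_two_mul_two_mul_sub_one (s : K) (k : ℤ) :
    qNumber s (2 * (2 * k - 1)) = -diagCoeff s k * (s ^ (2 * k - 1) - s ^ (1 - 2 * k)) := by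
  rw [qNumber, diagCoeff, zpow_one_sub_two_mul, zpow_neg, mul_comm 2 (2 * k - 1), zpow_mul]
  norm_cast
  ring

variable {s : K}

lemma zpow_two_mul_succ_sub_one (hs : s ≠ 0) (k : ℤ) :
    s ^ (2 * (k + 1) - 1) = s ^ (2 * k - 1) * s ^ 2 := by
  rw [← zpow_natCast s 2, ← zpow_add₀ hs]
  congr 1
  push_cast
  ring

lemma zpow_two_mul_pred_sub_one (hs : s ≠ 0) (k : ℤ) :
    s ^ (2 * (k - 1) - 1) = s ^ (2 * k - 1) / s ^ 2 := by
  rw [← zpow_natCast s 2, ← zpow_sub₀ hs]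
  congr 1
  push_cast
  ring

lemma zpow_sub_zpow_neg_ne_zero (hs : s ≠ 0) {t : ℤ} (ht : (s ^ 2) ^ t ≠ 1) :
    s ^ t - s ^ (-t) ≠ 0 := by
  contrapose! ht
  rw [sq, mul_zpow]
  nth_rewrite 2 [sub_eq_zero.mp ht]
  rw [← zpow_add₀ hs, add_neg_cancel, zpow_zero]

lemma sq_sub_inv_ne_zero (hs : s ≠ 0) (hq : (s ^ 2) ^ 2 ≠ 1) : s ^ 2 - (s ^ 2)⁻¹ ≠ 0 := by
  simpa only [zpow_neg, zpow_ofNat] using zpow_sub_zpow_neg_ne_zero hs (t := 2) (mod_cast hq)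

lemma diagCoeff_succ_add_pred (hs : s ≠ 0) (k : ℤ) :
    diagCoeff s (k + 1) + diagCoeff s (k - 1) = (s ^ 2 + (s ^ 2)⁻¹) * diagCoeff s k := by
  have hx : s ^ (2 * k - 1) ≠ 0 := zpow_ne_zero _ hs
  simp only [diagCoeff, zpow_one_sub_two_mul, zpow_two_mul_succ_sub_one hs,
    zpow_two_mul_pred_sub_one hs]
  field_simp
  ring

lemma diagCoeff_pred_sub_succ (hs : s ≠ 0) (hq : (s ^ 2) ^ 2 ≠ 1) (k : ℤ) :
    diagCoeff s (k - 1) - diagCoeff s (k + 1) = s ^ (2 * k - 1) - s ^ (1 - 2 * k) := by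
  have hx : s ^ (2 * k - 1) ≠ 0 := zpow_ne_zero _ hs
  simp only [diagCoeff, zpow_one_sub_two_mul, zpow_two_mul_succ_sub_one hs,
    zpow_two_mul_pred_sub_one hs]
  rw [← neg_div, ← neg_div, ← sub_div, div_eq_iff (sq_sub_inv_ne_zero hs hq)]
  field_simp
  ring

lemma diagCoeff_succ_sq_add_sq (hs : s ≠ 0) (hq : (s ^ 2) ^ 2 ≠ 1) (k : ℤ) :
    diagCoeff s (k + 1) ^ 2 - (s ^ 2 + (s ^ 2)⁻¹) * diagCoeff s (k + 1) * diagCoeff s k +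
      diagCoeff s k ^ 2 = -1 := by
  have hx : s ^ (2 * k - 1) ≠ 0 := zpow_ne_zero _ hs
  have hq' : s ^ 4 - 1 ≠ 0 := by rwa [sub_ne_zero, show s ^ 4 = (s ^ 2) ^ 2 by ring]
  simp only [diagCoeff, zpow_one_sub_two_mul, zpow_two_mul_succ_sub_one hs]
  field_simp
  ring

lemma qNumber_mul_sub_qNumber_mul (hs : s ≠ 0) (n k : ℤ) :
    qNumber s (2 * (n + k - 1)) * qNumber s (2 * (n - (k - 1))) -
      qNumber s (2 * (n + k)) * qNumber s (2 * (n - k)) = qNumber s (2 * (2 * k - 1)) := by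
  have hx : s ^ k ≠ 0 := zpow_ne_zero _ hs
  have hN : s ^ n ≠ 0 := zpow_ne_zero _ hs
  simp only [qNumber, zpow_neg, two_mul, zpow_add₀ hs, zpow_sub₀ hs, zpow_one]
  generalize hd : s ^ 2 - (s ^ 2)⁻¹ = d
  rcases eq_or_ne d 0 with rfl | hd0
  · simp
  field_simp
  subst hd
  field_simp
  ring

lemma two_mul_diagCoeff_sub_succ (hs : s ≠ 0) (hq : (s ^ 2) ^ 2 ≠ 1) (k : ℤ) :
    2 * diagCoeff s k - (s ^ 2 + (s ^ 2)⁻¹) * diagCoeff s (k + 1) =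
      s ^ (2 * (k + 1) - 1) - s ^ (1 - 2 * (k + 1)) := by
  rw [← diagCoeff_succ_add_pred hs, ← diagCoeff_pred_sub_succ hs hq, add_sub_cancel_right]
  ring

lemma two_mul_diagCoeff_sub_pred (hs : s ≠ 0) (hq : (s ^ 2) ^ 2 ≠ 1) (k : ℤ) :
    2 * diagCoeff s k - (s ^ 2 + (s ^ 2)⁻¹) * diagCoeff s (k - 1) =
      -(s ^ (2 * (k - 1) - 1) - s ^ (1 - 2 * (k - 1))) := by
  rw [← diagCoeff_succ_add_pred hs, ← diagCoeff_pred_sub_succ hs hq, sub_add_cancel]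
  ring

variable {i : K} {n k : ℤ}

lemma raiseCoeff_mul_lowerCoeff_mul (hs : s ≠ 0) (hq : (s ^ 2) ^ 2 ≠ 1) (hi : i ^ 2 = -1)
    (hk : k ≠ n → s ^ (2 * (k + 1) - 1) - s ^ (1 - 2 * (k + 1)) ≠ 0) :
    raiseCoeff i s n k * lowerCoeff i s n (k + 1) *
        (2 * diagCoeff s k - (s ^ 2 + (s ^ 2)⁻¹) * diagCoeff s (k + 1)) =
      -(qNumber s (2 * (n + k)) * qNumber s (2 * (n - k)) /
        (s ^ (2 * k - 1) - s ^ (1 - 2 * k))) := by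
  rw [two_mul_diagCoeff_sub_succ hs hq]
  rcases eq_or_ne k n with rfl | hkn
  · simp [raiseCoeff, qNumber]
  · rw [mul_assoc, lowerCoeff, div_mul_cancel₀ _ (hk hkn), raiseCoeff, ← add_assoc,
      add_sub_cancel_right]
    linear_combination qNumber s (2 * (n + k)) * qNumber s (2 * (n - k)) /
        (s ^ (2 * k - 1) - s ^ (1 - 2 * k)) * hi

lemma lowerCoeff_mul_raiseCoeff_mul (hs : s ≠ 0) (hq : (s ^ 2) ^ 2 ≠ 1) (hi : i ^ 2 = -1)
    (hk : s ^ (2 * (k - 1) - 1) - s ^ (1 - 2 * (k - 1)) ≠ 0) :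
    lowerCoeff i s n k * raiseCoeff i s n (k - 1) *
        (2 * diagCoeff s k - (s ^ 2 + (s ^ 2)⁻¹) * diagCoeff s (k - 1)) =
      qNumber s (2 * (n + k - 1)) * qNumber s (2 * (n - (k - 1))) /
        (s ^ (2 * k - 1) - s ^ (1 - 2 * k)) := by
  rw [two_mul_diagCoeff_sub_pred hs hq, mul_neg, mul_assoc, raiseCoeff, div_mul_cancel₀ _ hk,
    lowerCoeff]
  linear_combination -(qNumber s (2 * (n + k - 1)) * qNumber s (2 * (n - (k - 1))) /
        (s ^ (2 * k - 1) - s ^ (1 - 2 * k))) * hi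

lemma raiseCoeff_mul_add_lowerCoeff_mul (hs : s ≠ 0) (hq : (s ^ 2) ^ 2 ≠ 1)
    (hi : i ^ 2 = -1) (hk : s ^ (2 * k - 1) - s ^ (1 - 2 * k) ≠ 0)
    (hk_pred : s ^ (2 * (k - 1) - 1) - s ^ (1 - 2 * (k - 1)) ≠ 0)
    (hk_succ : k ≠ n → s ^ (2 * (k + 1) - 1) - s ^ (1 - 2 * (k + 1)) ≠ 0) :
    raiseCoeff i s n k * lowerCoeff i s n (k + 1) *
          (2 * diagCoeff s k - (s ^ 2 + (s ^ 2)⁻¹) * diagCoeff s (k + 1)) +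
        lowerCoeff i s n k * raiseCoeff i s n (k - 1) *
          (2 * diagCoeff s k - (s ^ 2 + (s ^ 2)⁻¹) * diagCoeff s (k - 1)) =
      -diagCoeff s k := by
  rw [raiseCoeff_mul_lowerCoeff_mul hs hq hi hk_succ,
    lowerCoeff_mul_raiseCoeff_mul hs hq hi hk_pred, neg_add_eq_sub, ← sub_div,
    qNumber_mul_sub_qNumber_mul hs, qNumber_two_mul_two_mul_sub_one, mul_div_cancel_right₀ _ hk]

end Coefficients

section Reflection

variable {K V : Type*} [Field K] [AddCommGroup V] [Module K V] {i s : K} {n : ℤ} {v : ℤ → V}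
  {T₁ T₂ : Module.End K V}

/-- The extension of a family indexed by `k ≥ 1` to all integers by the rule
`v (1 - k) = i (-1)^k v k`, under which `R(I₂)` becomes tridiagonal at `k = 1` too. -/
def reflect (i : K) (v : ℤ → V) (k : ℤ) : V :=
  if 1 ≤ k then v k else (-(i * (-1) ^ k)) • v (1 - k)

lemma reflect_of_one_le {k : ℤ} (hk : 1 ≤ k) : reflect i v k = v k := if_pos hk

lemma reflect_one_sub (hi : i ^ 2 = -1) (k : ℤ) :
    reflect i v (1 - k) = (i * (-1) ^ k) • reflect i v k := by
  by_cases hk : 1 ≤ k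
  · have hsign : (-1 : K) ^ (1 - k) = -(-1) ^ k := by
      rw [zpow_sub₀ (neg_ne_zero.mpr one_ne_zero), zpow_one, div_eq_mul_inv, ← inv_zpow,
        inv_neg_one, neg_one_mul]
    rw [reflect, reflect, if_pos hk, if_neg (by omega), sub_sub_cancel, hsign, mul_neg, neg_neg]
  · have hsign : (-1 : K) ^ k * (-1) ^ k = 1 := by rw [← mul_zpow]; simp
    have hscalar : i * (-1) ^ k * -(i * (-1) ^ k) = 1 := by
      linear_combination -(i ^ 2) * hsign - hi
    rw [reflect, reflect, if_neg hk, if_pos (by omega), smul_smul, hscalar, one_smul]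

lemma apply_reflect_eq_diagCoeff_smul (hi : i ^ 2 = -1)
    (h₁ : ∀ k, 1 ≤ k → T₁ (v k) = diagCoeff s k • v k) (k : ℤ) :
    T₁ (reflect i v k) = diagCoeff s k • reflect i v k := by
  rcases le_or_gt 1 k with hk | hk
  · rw [reflect_of_one_le hk, h₁ k hk]
  · obtain ⟨j, rfl⟩ : ∃ j, k = 1 - j := ⟨1 - k, by ring⟩
    rw [reflect_one_sub hi, diagCoeff_one_sub, map_smul, reflect_of_one_le (by omega),
      h₁ j (by omega), smul_comm]

variable (hi : i ^ 2 = -1)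
  (h₂_one : T₂ (v 1) = (qNumber s (2 * n) / (s - s⁻¹)) • v 1 +
    (i * qNumber s (2 * (n - 1)) / (s - s⁻¹)) • v 2)
  (h₂ : ∀ k, 2 ≤ k → k ≤ n →
    T₂ (v k) = raiseCoeff i s n k • v (k + 1) + lowerCoeff i s n k • v (k - 1))

include hi h₂_one h₂

lemma apply_reflect_of_one_le {k : ℤ} (hk : 1 ≤ k) (hkn : k ≤ n) :
    T₂ (reflect i v k) =
      raiseCoeff i s n k • reflect i v (k + 1) + lowerCoeff i s n k • reflect i v (k - 1) := by
  rw [reflect_of_one_le hk, reflect_of_one_le (by omega)]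
  rcases hk.eq_or_lt with rfl | hk
  · have h_zero : reflect i v 0 = (-i) • v 1 := by simp [reflect]
    have h_raise : raiseCoeff i s n 1 = i * qNumber s (2 * (n - 1)) / (s - s⁻¹) := by
      norm_num [raiseCoeff]
    have h_lower : lowerCoeff i s n 1 * -i = qNumber s (2 * n) / (s - s⁻¹) := by
      have h : lowerCoeff i s n 1 = i * qNumber s (2 * n) / (s - s⁻¹) := by norm_num [lowerCoeff]
      rw [h]
      linear_combination -(qNumber s (2 * n) / (s - s⁻¹)) * hi
    rw [sub_self, h_zero, smul_smul, h_lower, h_raise, h₂_one, add_comm, one_add_one_eq_two]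
  · rw [reflect_of_one_le (by omega), h₂ k (by omega) hkn]

lemma apply_reflect_eq_raiseCoeff_add_lowerCoeff {k : ℤ} (hk : 1 - n ≤ k) (hkn : k ≤ n) :
    T₂ (reflect i v k) =
      raiseCoeff i s n k • reflect i v (k + 1) + lowerCoeff i s n k • reflect i v (k - 1) := by
  rcases le_or_gt 1 k with hk1 | hk1
  · exact apply_reflect_of_one_le hi h₂_one h₂ hk1 hkn
  · obtain ⟨j, rfl⟩ : ∃ j, k = 1 - j := ⟨1 - k, by ring⟩
    have h_sign : ∀ m : ℤ, (-1 : K) ^ (m + 1) = -(-1) ^ m := fun m ↦ by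
      rw [zpow_add_one₀ (neg_ne_zero.mpr one_ne_zero), mul_neg_one]
    have h_succ : reflect i v (1 - j + 1) = (-(i * (-1) ^ j)) • reflect i v (j - 1) := by
      rw [show 1 - j + 1 = 1 - (j - 1) by ring, reflect_one_sub hi, ← sub_add_cancel j 1, h_sign,
        add_sub_cancel_right, mul_neg, neg_neg]
    have h_pred : reflect i v (1 - j - 1) = (-(i * (-1) ^ j)) • reflect i v (j + 1) := by
      rw [sub_sub, reflect_one_sub hi, h_sign, mul_neg]
    rw [raiseCoeff_one_sub, lowerCoeff_one_sub, reflect_one_sub hi, h_succ, h_pred, map_smul,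
      apply_reflect_of_one_le hi h₂_one h₂ (by omega) (by omega)]
    module

end Reflection

theorem stmt_9_general {K V : Type*} [Field K] [AddCommGroup V] [Module K V] {i s : K}
    (hi : i ^ 2 = -1) (hs : s ≠ 0) (hq : (s ^ 2) ^ 2 ≠ 1) (n : ℤ)
    (hodd : ∀ k, 1 ≤ k → k ≤ n → (s ^ 2) ^ (2 * k - 1) ≠ 1)
    (v : ℤ → V) (hv : ∀ k, n < k → v k = 0)
    (hspan : Submodule.span K (v '' Set.Icc 1 n) = ⊤) (T₁ T₂ : Module.End K V)
    (h₁ : ∀ k, 1 ≤ k → k ≤ n → T₁ (v k) = diagCoeff s k • v k)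
    (h₂_one : T₂ (v 1) = (qNumber s (2 * n) / (s - s⁻¹)) • v 1 +
      (i * qNumber s (2 * (n - 1)) / (s - s⁻¹)) • v 2)
    (h₂ : ∀ k, 2 ≤ k → k ≤ n →
      T₂ (v k) = raiseCoeff i s n k • v (k + 1) + lowerCoeff i s n k • v (k - 1)) :
    cubicBracket (s ^ 2 + (s ^ 2)⁻¹) T₁ T₂ = -T₁ ∧
      cubicBracket (s ^ 2 + (s ^ 2)⁻¹) T₂ T₁ = -T₂ := by
  have hT₁ : ∀ k, T₁ (reflect i v k) = diagCoeff s k • reflect i v k := by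
    refine apply_reflect_eq_diagCoeff_smul hi fun k hk ↦ ?_
    rcases le_or_gt k n with hkn | hkn
    · exact h₁ k hk hkn
    · simp [hv k hkn]
  have hT₂ := fun k ↦ apply_reflect_eq_raiseCoeff_add_lowerCoeff (k := k) hi h₂_one h₂
  have hden : ∀ k, 1 ≤ k → k ≤ n → s ^ (2 * k - 1) - s ^ (1 - 2 * k) ≠ 0 := fun k hk hkn ↦ by
    simpa only [neg_sub] using zpow_sub_zpow_neg_ne_zero hs (hodd k hk hkn)
  have hden_zero : ∀ k, 0 ≤ k → k ≤ n → 1 ≤ n → s ^ (2 * k - 1) - s ^ (1 - 2 * k) ≠ 0 := by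
    intro k hk hkn hn
    rcases hk.eq_or_lt with rfl | hk
    · rw [← neg_ne_zero, neg_sub]
      exact hden 1 le_rfl hn
    · exact hden k hk hkn
  have hext : ∀ {S T : Module.End K V},
      (∀ k, 1 ≤ k → k ≤ n → S (reflect i v k) = T (reflect i v k)) → S = T := by
    refine fun h ↦ LinearMap.ext_on hspan ?_
    rintro _ ⟨k, ⟨hk, hkn⟩, rfl⟩
    simpa only [reflect_of_one_le hk] using h k hk hkn
  refine ⟨hext fun k hk hkn ↦ ?_, hext fun k hk hkn ↦ ?_⟩
  · have hT₂_succ : raiseCoeff i s n k • T₂ (reflect i v (k + 1)) = raiseCoeff i s n k •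
        (raiseCoeff i s n (k + 1) • reflect i v (k + 2) +
          lowerCoeff i s n (k + 1) • reflect i v k) := by
      rcases hkn.eq_or_lt with rfl | hkn
      · simp only [raiseCoeff_self, zero_smul]
      · rw [hT₂ (k + 1) (by omega) (by omega), add_assoc, one_add_one_eq_two, add_sub_cancel_right]
    have hT₂_pred : T₂ (reflect i v (k - 1)) =
        raiseCoeff i s n (k - 1) • reflect i v k +
          lowerCoeff i s n (k - 1) • reflect i v (k - 2) := by
      rw [hT₂ (k - 1) (by omega) (by omega), sub_add_cancel, sub_sub, one_add_one_eq_two]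
    rw [cubicBracket_apply_eq_smul hT₁ (diagCoeff_succ_add_pred hs) (hT₂ k (by omega) hkn)
      hT₂_succ hT₂_pred, raiseCoeff_mul_add_lowerCoeff_mul hs hq hi (hden k hk hkn)
      (hden_zero (k - 1) (by omega) (by omega) (by omega))
      (fun hne ↦ hden (k + 1) (by omega) (by omega)), LinearMap.neg_apply, hT₁, neg_smul]
  · exact cubicBracket_apply_eq_neg hT₁ (diagCoeff_succ_sq_add_sq hs hq) (hT₂ k (by omega) hkn)

lemma e_eq_zero_of_lt {n : ℕ} {k : ℤ} (hk : n < k) : e n k = 0 := by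
  funext j
  exact if_neg (by omega)

lemma e_succ_eq_single {n : ℕ} (j : Fin n) : e n (j + 1) = Pi.single j 1 := by
  funext l
  simp [e, Pi.single_apply, Fin.ext_iff]

lemma span_e_eq_top (n : ℕ) : Submodule.span ℂ (e n '' Set.Icc 1 n) = ⊤ := by
  rw [eq_top_iff, ← (Pi.basisFun ℂ (Fin n)).span_eq, Submodule.span_le]
  rintro _ ⟨j, rfl⟩
  rw [Pi.basisFun_apply, ← e_succ_eq_single]
  exact Submodule.subset_span ⟨j + 1, ⟨by omega, by omega⟩, rfl⟩

/-- For `q` not a root of unity, the `n`-dimensional representation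
`R_n^{(i,+)}` of `U_q(so_3)` (with `q^{k-1/2} = s^(2k-1)`) satisfies the
defining relations (7) and (8) of `U_q(so_3)`. -/
theorem stmt_9 (q s : ℂ) (hq0 : q ≠ 0)
    (hroot : ∀ k : ℕ, 0 < k → q ^ k ≠ 1) (hs : s ^ 2 = q)
    (n : ℕ) (hn : 1 ≤ n)
    (T1 T2 : Module.End ℂ (Fin n → ℂ))
    (h1 : ∀ k : ℤ, 1 ≤ k → k ≤ n →
      T1 (e n k) = (-((s ^ (2 * k - 1) + s ^ (1 - 2 * k)) / (q - q⁻¹))) • e n k)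
    (h2a : T2 (e n 1) = (br q s (2 * n) / (s - s⁻¹)) • e n 1 +
      (Complex.I * br q s (2 * (n - 1)) / (s - s⁻¹)) • e n 2)
    (h2b : ∀ k : ℤ, 2 ≤ k → k ≤ n →
      T2 (e n k) =
        (Complex.I * br q s (2 * (n - k)) / (s ^ (2 * k - 1) - s ^ (1 - 2 * k)))
          • e n (k + 1) +
        (Complex.I * br q s (2 * (n + k - 1)) / (s ^ (2 * k - 1) - s ^ (1 - 2 * k)))
          • e n (k - 1)) :
    T1 * T2 ^ 2 - (q + q⁻¹) • (T2 * T1 * T2) + T2 ^ 2 * T1 = -T1 ∧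
    T2 * T1 ^ 2 - (q + q⁻¹) • (T1 * T2 * T1) + T1 ^ 2 * T2 = -T2 := by
  subst hs
  have hs0 : s ≠ 0 := (pow_ne_zero_iff two_ne_zero).mp hq0
  have hodd : ∀ k : ℤ, 1 ≤ k → k ≤ n → (s ^ 2) ^ (2 * k - 1) ≠ 1 := fun k hk _ ↦ by
    lift 2 * k - 1 to ℕ using by omega with m hm
    exact_mod_cast hroot m (by omega)
  exact stmt_9_general Complex.I_sq hs0 (hroot 2 two_pos) n hodd (e n) (fun _ ↦ e_eq_zero_of_lt)
    (span_e_eq_top n) T1 T2 h1 h2a h2b
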